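/- Assume (H1)–(H4). If ∫_{t₀}^∞ r₁(v)^{-1/α} ( ∫_{t₀}^v r₂(u)^{-1/β} ( ∫_{t₀}^u q(s) ds )^{1/β} du )^{1/α} dv = ∞, then equation (E) has property A, i.e. every solution of (E) is either oscillatory or tends to 0 as t → ∞. -/

import Mathlib

open Filter MeasureTheory Set

/-- Signed power: for exponents that are quotients of odd positive integers,
`x ^ p` preserves the sign of `x`. -/
noncomputable def opow (x p : ℝ) : ℝ := Real.sign x * |x| ^ p

/-- `L₁y = r₁ · (y')^α`. -/
noncomputable def L1 (r₁ : ℝ → ℝ) (α : ℝ) (y : ℝ → ℝ) : ℝ → ℝ :=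
  fun t => r₁ t * opow (deriv y t) α

/-- `L₂y = r₂ · ((L₁y)')^β`. -/
noncomputable def L2 (r₁ r₂ : ℝ → ℝ) (α β : ℝ) (y : ℝ → ℝ) : ℝ → ℝ :=
  fun t => r₂ t * opow (deriv (L1 r₁ α y) t) β

/-- `L₃y = (L₂y)'`. -/
noncomputable def L3 (r₁ r₂ : ℝ → ℝ) (α β : ℝ) (y : ℝ → ℝ) : ℝ → ℝ :=
  deriv (L2 r₁ r₂ α β y)

/-- A real number which is a quotient of odd positive integers. -/
def OddQuotient (x : ℝ) : Prop :=
  ∃ m n : ℕ, Odd m ∧ Odd n ∧ 0 < m ∧ 0 < n ∧ x = (m : ℝ) / (n : ℝ)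

/-- The standing hypotheses (H1)–(H4). -/
structure Hyp (t₀ α β γ : ℝ) (r₁ r₂ q σ : ℝ → ℝ) : Prop where
  ht₀ : 0 < t₀
  hα : OddQuotient α
  hβ : OddQuotient β
  hγ : OddQuotient γ
  hr₁c : ContinuousOn r₁ (Set.Ici t₀)
  hr₂c : ContinuousOn r₂ (Set.Ici t₀)
  hr₁p : ∀ t, t₀ ≤ t → 0 < r₁ t
  hr₂p : ∀ t, t₀ ≤ t → 0 < r₂ t
  /-- noncanonical: `π₁(t₀) = ∫_{t₀}^∞ r₁^{-1/α} < ∞` -/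
  hπ₁fin : IntegrableOn (fun s => r₁ s ^ (-(1/α))) (Set.Ici t₀)
  /-- noncanonical: `π₂(t₀) = ∫_{t₀}^∞ r₂^{-1/β} < ∞` -/
  hπ₂fin : IntegrableOn (fun s => r₂ s ^ (-(1/β))) (Set.Ici t₀)
  hqc : ContinuousOn q (Set.Ici t₀)
  hq0 : ∀ t, t₀ ≤ t → 0 ≤ q t
  /-- `q` does not vanish eventually -/
  hqnv : ∀ T, t₀ ≤ T → ∃ t, T ≤ t ∧ q t ≠ 0
  hσd : DifferentiableOn ℝ σ (Set.Ici t₀)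
  hσd' : ContinuousOn (deriv σ) (Set.Ici t₀)
  hσpos : ∀ t, t₀ ≤ t → 0 < σ t
  hσadv : ∀ t, t₀ ≤ t → t ≤ σ t
  hσmono : ∀ t, t₀ ≤ t → 0 ≤ deriv σ t

/-- `y` is a (nontrivial) solution of equation (E) on some half-line `[T,∞) ⊆ [t₀,∞)`. -/
def IsSolution (t₀ α β γ : ℝ) (r₁ r₂ q σ y : ℝ → ℝ) : Prop :=
  ∃ T, t₀ ≤ T ∧
    ContinuousOn y (Set.Ici T) ∧
    DifferentiableOn ℝ y (Set.Ici T) ∧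
    ContinuousOn (L1 r₁ α y) (Set.Ici T) ∧
    DifferentiableOn ℝ (L1 r₁ α y) (Set.Ici T) ∧
    ContinuousOn (L2 r₁ r₂ α β y) (Set.Ici T) ∧
    DifferentiableOn ℝ (L2 r₁ r₂ α β y) (Set.Ici T) ∧
    (∀ t, T ≤ t → L3 r₁ r₂ α β y t + q t * opow (y (σ t)) γ = 0) ∧
    (∀ T', T ≤ T' → ∃ t, T' ≤ t ∧ y t ≠ 0)

/-- A function is oscillatory if it has arbitrarily large zeros. -/
def Oscillatory (y : ℝ → ℝ) : Prop := ∀ T : ℝ, ∃ t, T ≤ t ∧ y t = 0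

/-- Equation (E) has property A: every solution is oscillatory or tends to `0`. -/
def PropertyA (t₀ α β γ : ℝ) (r₁ r₂ q σ : ℝ → ℝ) : Prop :=
  ∀ y : ℝ → ℝ, IsSolution t₀ α β γ r₁ r₂ q σ y →
    Oscillatory y ∨ Filter.Tendsto y Filter.atTop (nhds 0)

/-- Equation (E) is oscillatory: every solution is oscillatory. -/
def OscillatoryEq (t₀ α β γ : ℝ) (r₁ r₂ q σ : ℝ → ℝ) : Prop :=
  ∀ y : ℝ → ℝ, IsSolution t₀ α β γ r₁ r₂ q σ y → Oscillatory y

/-- `π₁(t) = ∫_t^∞ r₁(s)^{-1/α} ds`. -/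
noncomputable def pi1 (r₁ : ℝ → ℝ) (α : ℝ) (t : ℝ) : ℝ :=
  ∫ s in Set.Ioi t, r₁ s ^ (-(1/α))

/-- `π₂(t) = ∫_t^∞ r₂(s)^{-1/β} ds`. -/
noncomputable def pi2 (r₂ : ℝ → ℝ) (β : ℝ) (t : ℝ) : ℝ :=
  ∫ s in Set.Ioi t, r₂ s ^ (-(1/β))

/-- `π(t) = ∫_t^∞ r₁(s)^{-1/α} · π₂(s)^{1/α} ds`. -/
noncomputable def piInf (r₁ r₂ : ℝ → ℝ) (α β : ℝ) (t : ℝ) : ℝ :=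
  ∫ s in Set.Ioi t, r₁ s ^ (-(1/α)) * (pi2 r₂ β s) ^ (1/α)

/-- The class `S₁`: `y > 0, L₁y < 0, L₂y < 0, L₃y < 0` on `[t₁,∞)`. -/
def InS1 (r₁ r₂ : ℝ → ℝ) (α β : ℝ) (y : ℝ → ℝ) (t₁ : ℝ) : Prop :=
  ∀ t, t₁ ≤ t → 0 < y t ∧ L1 r₁ α y t < 0 ∧ L2 r₁ r₂ α β y t < 0 ∧ L3 r₁ r₂ α β y t < 0

/-- The class `S₂`: `y > 0, L₁y < 0, L₂y > 0, L₃y < 0` on `[t₁,∞)`. -/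
def InS2 (r₁ r₂ : ℝ → ℝ) (α β : ℝ) (y : ℝ → ℝ) (t₁ : ℝ) : Prop :=
  ∀ t, t₁ ≤ t → 0 < y t ∧ L1 r₁ α y t < 0 ∧ 0 < L2 r₁ r₂ α β y t ∧ L3 r₁ r₂ α β y t < 0

/-- The class `S₃`: `y > 0, L₁y > 0, L₂y > 0, L₃y < 0` on `[t₁,∞)`. -/
def InS3 (r₁ r₂ : ℝ → ℝ) (α β : ℝ) (y : ℝ → ℝ) (t₁ : ℝ) : Prop :=
  ∀ t, t₁ ≤ t → 0 < y t ∧ 0 < L1 r₁ α y t ∧ 0 < L2 r₁ r₂ α β y t ∧ L3 r₁ r₂ α β y t < 0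

/-- The class `S₄`: `y > 0, L₁y > 0, L₂y < 0, L₃y < 0` on `[t₁,∞)`. -/
def InS4 (r₁ r₂ : ℝ → ℝ) (α β : ℝ) (y : ℝ → ℝ) (t₁ : ℝ) : Prop :=
  ∀ t, t₁ ≤ t → 0 < y t ∧ 0 < L1 r₁ α y t ∧ L2 r₁ r₂ α β y t < 0 ∧ L3 r₁ r₂ α β y t < 0

/-!
Up to replacing `y` by `-y`, a nonoscillatory solution is eventually positive. Then `L₂y`, `L₁y` and
`y` are successively eventually monotone, so `y` tends to `0` unless it is eventually bounded below
by some `c > 0`. In that case `(L₂y)' ≤ -c^γ q`. The divergence condition and the finiteness of `π₁`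
and `π₂` force the inner iterated integrals to diverge too, so each of three successive integrations
absorbs its constant of integration: `L₂y`, `L₁y` and finally `y` lie below negative multiples of
the corresponding iterated integrals, and `y` would tend to `-∞`.
-/

section SignedPower

variable {x c p : ℝ}

lemma opow_neg_left (x p : ℝ) : opow (-x) p = -opow x p := by
  rw [opow, opow, Real.sign_neg, abs_neg, neg_mul]

lemma opow_of_pos (hx : 0 < x) (p : ℝ) : opow x p = x ^ p := by
  rw [opow, Real.sign_of_pos hx, abs_of_pos hx, one_mul]

lemma opow_nonneg_iff : 0 ≤ opow x p ↔ 0 ≤ x := by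
  rcases lt_trichotomy x 0 with hx | rfl | hx
  · have : 0 < (-x) ^ p := Real.rpow_pos_of_pos (neg_pos.2 hx) p
    rw [← neg_neg x, opow_neg_left, opow_of_pos (neg_pos.2 hx)]
    constructor <;> intro <;> linarith
  · simp [opow]
  · rw [opow_of_pos hx]
    exact iff_of_true (Real.rpow_nonneg hx.le p) hx.le

lemma opow_nonpos_iff : opow x p ≤ 0 ↔ x ≤ 0 := by
  rw [← neg_nonneg, ← opow_neg_left, opow_nonneg_iff, neg_nonneg]

lemma rpow_le_opow (hp : 0 ≤ p) (hc : 0 < c) (hcx : c ≤ x) : c ^ p ≤ opow x p := by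
  rw [opow_of_pos (hc.trans_le hcx)]
  exact Real.rpow_le_rpow hc.le hcx hp

lemma rpow_one_div_le_of_le_opow (hp : 0 < p) (hc : 0 ≤ c) (h : c ≤ opow x p) :
    c ^ (1 / p) ≤ x := by
  rcases (opow_nonneg_iff.1 (hc.trans h)).eq_or_lt with rfl | hx
  · have hc0 : c = 0 := le_antisymm (by simpa [opow] using h) hc
    rw [hc0, Real.zero_rpow (one_div_ne_zero hp.ne')]
  · rw [opow_of_pos hx] at h
    rwa [one_div, Real.rpow_inv_le_iff_of_pos hc hx.le hp]

lemma le_neg_of_mul_opow_le {r k g : ℝ} (hp : 0 < p) (hr : 0 < r) (hk : 0 ≤ k) (hg : 0 ≤ g)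
    (h : r * opow x p ≤ -(k * g)) : x ≤ -(k ^ (1 / p) * (r ^ (-(1 / p)) * g ^ (1 / p))) := by
  have hroot : (k * (r⁻¹ * g)) ^ (1 / p) ≤ -x := by
    refine rpow_one_div_le_of_le_opow hp (by positivity) ?_
    rw [opow_neg_left, mul_left_comm, inv_mul_le_iff₀ hr]
    linarith
  rw [Real.mul_rpow hk (by positivity), Real.mul_rpow (by positivity) hg, Real.inv_rpow hr.le,
    ← Real.rpow_neg hr.le] at hroot
  exact le_neg_of_le_neg hroot

end SignedPower

section EventualSign

variable {f : ℝ → ℝ}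

/-- `f` is eventually nonnegative or eventually nonpositive at `+∞`. Zeros are allowed, so that the
property passes from the derivative of a function to the function itself. -/
def EventuallyOfOneSign (f : ℝ → ℝ) : Prop :=
  (∀ᶠ t in atTop, 0 ≤ f t) ∨ ∀ᶠ t in atTop, f t ≤ 0

lemma EventuallyOfOneSign.of_neg (h : EventuallyOfOneSign (-f)) : EventuallyOfOneSign f := by
  simpa only [EventuallyOfOneSign, Pi.neg_apply, neg_nonneg, neg_nonpos, or_comm] using h

lemma exists_monotoneOn_Ici_of_deriv_nonneg (hf : ∀ᶠ t in atTop, DifferentiableAt ℝ f t)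
    (hf' : ∀ᶠ t in atTop, 0 ≤ deriv f t) : ∃ T, MonotoneOn f (Ici T) := by
  obtain ⟨T, hT⟩ := eventually_atTop.1 (hf.and hf')
  exact ⟨T, monotoneOn_of_deriv_nonneg (convex_Ici T)
    (fun t ht => (hT t ht).1.continuousAt.continuousWithinAt)
    (fun t ht => (hT t (interior_subset ht)).1.differentiableWithinAt)
    (fun t ht => (hT t (interior_subset ht)).2)⟩

lemma exists_antitoneOn_Ici_of_deriv_nonpos (hf : ∀ᶠ t in atTop, DifferentiableAt ℝ f t)
    (hf' : ∀ᶠ t in atTop, deriv f t ≤ 0) : ∃ T, AntitoneOn f (Ici T) := by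
  obtain ⟨T, hT⟩ := exists_monotoneOn_Ici_of_deriv_nonneg (f := -f) (hf.mono fun t ht => ht.neg)
    (by simpa only [deriv.neg, neg_nonneg] using hf')
  exact ⟨T, neg_neg f ▸ hT.neg⟩

lemma EventuallyOfOneSign.of_monotoneOn {T : ℝ} (hf : MonotoneOn f (Ici T)) :
    EventuallyOfOneSign f := by
  by_cases h : ∃ t, T ≤ t ∧ 0 ≤ f t
  · obtain ⟨t, ht, hft⟩ := h
    exact .inl ((eventually_ge_atTop t).mono fun s hs => hft.trans (hf ht (ht.trans hs) hs))
  · push Not at h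
    exact .inr ((eventually_ge_atTop T).mono fun s hs => (h s hs).le)

lemma EventuallyOfOneSign.of_deriv (hf : ∀ᶠ t in atTop, DifferentiableAt ℝ f t)
    (h : EventuallyOfOneSign (deriv f)) : EventuallyOfOneSign f := by
  rcases h with h | h
  · obtain ⟨T, hT⟩ := exists_monotoneOn_Ici_of_deriv_nonneg hf h
    exact .of_monotoneOn hT
  · obtain ⟨T, hT⟩ := exists_antitoneOn_Ici_of_deriv_nonpos hf h
    exact .of_neg (.of_monotoneOn hT.neg)

lemma EventuallyOfOneSign.of_mul_opow {r : ℝ → ℝ} {p : ℝ} (hr : ∀ᶠ t in atTop, 0 < r t)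
    (h : EventuallyOfOneSign fun t => r t * opow (f t) p) : EventuallyOfOneSign f := by
  refine h.imp (fun h => ?_) fun h => ?_ <;> filter_upwards [hr, h] with t hrt ht
  · exact opow_nonneg_iff.1 (nonneg_of_mul_nonneg_right ht hrt)
  · exact opow_nonpos_iff.1 (nonpos_of_mul_nonpos_right ht hrt)

lemma tendsto_zero_or_eventually_ge_of_deriv (hf : ∀ᶠ t in atTop, DifferentiableAt ℝ f t)
    (hpos : ∀ᶠ t in atTop, 0 < f t) (h : EventuallyOfOneSign (deriv f)) :
    Tendsto f atTop (nhds 0) ∨ ∃ c > 0, ∀ᶠ t in atTop, c ≤ f t := by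
  rw [or_iff_not_imp_right]
  intro hsmall
  push Not at hsmall
  rcases h with h | h
  · obtain ⟨T, hT⟩ := exists_monotoneOn_Ici_of_deriv_nonneg hf h
    obtain ⟨S, hS, hTS⟩ := (hpos.and (eventually_ge_atTop T)).exists
    obtain ⟨t, hft, hSt⟩ := ((hsmall (f S) hS).and_eventually (eventually_ge_atTop S)).exists
    exact absurd (hT hTS (hTS.trans hSt) hSt) hft.not_ge
  · obtain ⟨T, hT⟩ := exists_antitoneOn_Ici_of_deriv_nonpos hf h
    refine tendsto_order.2 ⟨fun ε hε => hpos.mono fun t ht => hε.trans ht, fun ε hε => ?_⟩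
    obtain ⟨S, hS, hTS⟩ := ((hsmall ε hε).and_eventually (eventually_ge_atTop T)).exists
    exact (eventually_ge_atTop S).mono fun t ht => (hT hTS (hTS.trans ht) ht).trans_lt hS

lemma eventually_pos_or_neg_of_ne_zero (hf : ∀ᶠ t in atTop, ContinuousAt f t)
    (hne : ∀ᶠ t in atTop, f t ≠ 0) : (∀ᶠ t in atTop, 0 < f t) ∨ ∀ᶠ t in atTop, f t < 0 := by
  obtain ⟨T, hT⟩ := eventually_atTop.1 (hf.and hne)
  have himage : (f '' Ici T).OrdConnected :=
    (isPreconnected_Ici.image f fun t ht => (hT t ht).1.continuousWithinAt).ordConnected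
  have hzero : (0 : ℝ) ∉ f '' Ici T := fun ⟨t, ht, h0⟩ => (hT t ht).2 h0
  rcases (hT T le_rfl).2.lt_or_gt with h | h
  · refine .inr ((eventually_ge_atTop T).mono fun t ht => ?_)
    by_contra! hft
    exact hzero (himage.out ⟨T, self_mem_Ici, rfl⟩ ⟨t, ht, rfl⟩ ⟨h.le, hft⟩)
  · refine .inl ((eventually_ge_atTop T).mono fun t ht => ?_)
    by_contra! hft
    exact hzero (himage.out ⟨t, ht, rfl⟩ ⟨T, self_mem_Ici, rfl⟩ ⟨hft, h.le⟩)

end EventualSign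

section IteratedIntegral

variable {w r g φ : ℝ → ℝ} {a p : ℝ}

lemma intervalIntegrable_mul_of_monotoneOn {b : ℝ} (hab : a ≤ b)
    (hw : IntervalIntegrable w volume a b) (hg : MonotoneOn g (Icc a b)) :
    IntervalIntegrable (fun t => w t * g t) volume a b := by
  rw [intervalIntegrable_iff_integrableOn_Icc_of_le hab] at hw ⊢
  exact hw.mul_of_top_left (hg.memLp_isCompact isCompact_Icc)

lemma monotoneOn_rpow_const {s : Set ℝ} (hp : 0 ≤ p) (hg : MonotoneOn g s)
    (hg0 : ∀ t ∈ s, 0 ≤ g t) : MonotoneOn (fun t => g t ^ p) s :=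
  fun t ht _ hu htu => Real.rpow_le_rpow (hg0 t ht) (hg ht hu htu) hp

lemma monotoneOn_integral_of_nonneg (hφ : ∀ t ∈ Ici a, IntervalIntegrable φ volume a t)
    (hφ0 : ∀ t ∈ Ici a, 0 ≤ φ t) : MonotoneOn (fun t => ∫ s in a..t, φ s) (Ici a) := by
  intro t ht u hu htu
  refine intervalIntegral.integral_mono_interval le_rfl ht htu ?_ (hφ u hu)
  filter_upwards [ae_restrict_mem measurableSet_Ioc] with s hs
  exact hφ0 s hs.1.le

lemma integral_nonneg_of_nonneg {t : ℝ} (hφ0 : ∀ s ∈ Ici a, 0 ≤ φ s) (ht : a ≤ t) :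
    0 ≤ ∫ s in a..t, φ s :=
  intervalIntegral.integral_nonneg ht fun s hs => hφ0 s hs.1

lemma tendsto_atTop_of_tendsto_integral_mul (hw : IntegrableOn w (Ici a))
    (hw0 : ∀ t ∈ Ici a, 0 ≤ w t) (hg : MonotoneOn g (Ici a))
    (h : Tendsto (fun t => ∫ s in a..t, w s * g s) atTop atTop) : Tendsto g atTop atTop := by
  refine tendsto_atTop.2 fun M => ?_
  suffices hM : ∃ T ∈ Ici a, M ≤ g T by
    obtain ⟨T, haT, hT⟩ := hM
    exact (eventually_ge_atTop T).mono fun t ht => hT.trans (hg haT (haT.trans ht) ht)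
  by_contra! hbdd
  obtain ⟨t, hlarge, hat⟩ := ((h.eventually_gt_atTop ((∫ s in Ici a, w s) * max M 0)).and
    (eventually_ge_atTop a)).exists
  have hwt : IntervalIntegrable w volume a t :=
    (intervalIntegrable_iff_integrableOn_Icc_of_le hat).2 (hw.mono_set Icc_subset_Ici_self)
  refine hlarge.not_ge ?_
  calc ∫ s in a..t, w s * g s
      ≤ ∫ s in a..t, w s * max M 0 :=
        intervalIntegral.integral_mono_on hat
          (intervalIntegrable_mul_of_monotoneOn hat hwt (hg.mono Icc_subset_Ici_self))
          (hwt.mul_const _) fun s hs =>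
            mul_le_mul_of_nonneg_left ((hbdd s hs.1).le.trans (le_max_left _ _)) (hw0 s hs.1)
    _ = (∫ s in a..t, w s) * max M 0 := intervalIntegral.integral_mul_const _ _
    _ ≤ (∫ s in Ici a, w s) * max M 0 := by
        refine mul_le_mul_of_nonneg_right ?_ (le_max_right _ _)
        rw [intervalIntegral.integral_of_le hat]
        exact setIntegral_mono_set hw ((ae_restrict_mem measurableSet_Ici).mono hw0)
          (Ioc_subset_Icc_self.trans Icc_subset_Ici_self).eventuallyLE

lemma tendsto_atTop_of_tendsto_rpow {ι : Type*} {l : Filter ι} {u : ι → ℝ} (hp : 0 ≤ p)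
    (hu : ∀ᶠ i in l, 0 ≤ u i) (h : Tendsto (fun i => u i ^ p) l atTop) : Tendsto u l atTop := by
  refine tendsto_atTop.2 fun M => ?_
  filter_upwards [hu, h.eventually_gt_atTop (M ^ p)] with i hi hMi
  by_contra! hiM
  exact hMi.not_ge (Real.rpow_le_rpow hi hiM.le hp)

/-- The solution `f` of `r · (f')^p = g` with `f a = 0`, for `r > 0` and `g ≥ 0`. Starting from
`∫ q`, applying it first with `(r₂, β)` and then with `(r₁, α)` gives the iterated integral of the
divergence condition. -/
noncomputable def halfLinearPrimitive (a : ℝ) (r : ℝ → ℝ) (p : ℝ) (g : ℝ → ℝ) : ℝ → ℝ :=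
  fun t => ∫ s in a..t, r s ^ (-(1 / p)) * g s ^ (1 / p)

lemma halfLinear_integrand_nonneg (hr : ∀ t ∈ Ici a, 0 < r t) (hg0 : ∀ t ∈ Ici a, 0 ≤ g t) :
    ∀ t ∈ Ici a, 0 ≤ r t ^ (-(1 / p)) * g t ^ (1 / p) := fun t ht =>
  mul_nonneg (Real.rpow_nonneg (hr t ht).le _) (Real.rpow_nonneg (hg0 t ht) _)

lemma intervalIntegrable_halfLinear_integrand (hp : 0 < p)
    (hw : IntegrableOn (fun t => r t ^ (-(1 / p))) (Ici a)) (hg : MonotoneOn g (Ici a))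
    (hg0 : ∀ t ∈ Ici a, 0 ≤ g t) :
    ∀ t ∈ Ici a, IntervalIntegrable (fun s => r s ^ (-(1 / p)) * g s ^ (1 / p)) volume a t :=
  fun _ ht => intervalIntegrable_mul_of_monotoneOn ht
    ((intervalIntegrable_iff_integrableOn_Icc_of_le ht).2 (hw.mono_set Icc_subset_Ici_self))
    ((monotoneOn_rpow_const (one_div_pos.2 hp).le hg hg0).mono Icc_subset_Ici_self)

lemma halfLinearPrimitive_nonneg (hr : ∀ t ∈ Ici a, 0 < r t) (hg0 : ∀ t ∈ Ici a, 0 ≤ g t) :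
    ∀ t ∈ Ici a, 0 ≤ halfLinearPrimitive a r p g t := fun _ ht =>
  integral_nonneg_of_nonneg (halfLinear_integrand_nonneg hr hg0) ht

lemma monotoneOn_halfLinearPrimitive (hp : 0 < p) (hr : ∀ t ∈ Ici a, 0 < r t)
    (hw : IntegrableOn (fun t => r t ^ (-(1 / p))) (Ici a)) (hg : MonotoneOn g (Ici a))
    (hg0 : ∀ t ∈ Ici a, 0 ≤ g t) : MonotoneOn (halfLinearPrimitive a r p g) (Ici a) :=
  monotoneOn_integral_of_nonneg (intervalIntegrable_halfLinear_integrand hp hw hg hg0)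
    (halfLinear_integrand_nonneg hr hg0)

lemma tendsto_atTop_of_tendsto_halfLinearPrimitive (hp : 0 < p) (hr : ∀ t ∈ Ici a, 0 < r t)
    (hw : IntegrableOn (fun t => r t ^ (-(1 / p))) (Ici a)) (hg : MonotoneOn g (Ici a))
    (hg0 : ∀ t ∈ Ici a, 0 ≤ g t) (h : Tendsto (halfLinearPrimitive a r p g) atTop atTop) :
    Tendsto g atTop atTop :=
  have hp' : 0 ≤ 1 / p := (one_div_pos.2 hp).le
  tendsto_atTop_of_tendsto_rpow hp' ((eventually_ge_atTop a).mono hg0)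
    (tendsto_atTop_of_tendsto_integral_mul hw (fun t ht => Real.rpow_nonneg (hr t ht).le _)
      (monotoneOn_rpow_const hp' hg hg0) h)

end IteratedIntegral

section NegDominated

variable {f r g φ : ℝ → ℝ} {a p : ℝ}

/-- `f` eventually lies below a negative multiple of `g`; the one-sided order relation that survives
integration and root extraction. -/
def NegDominated (f g : ℝ → ℝ) : Prop :=
  ∃ k > 0, ∀ᶠ t in atTop, f t ≤ -(k * g t)

lemma NegDominated.tendsto_atBot (h : NegDominated f g) (hg : Tendsto g atTop atTop) :
    Tendsto f atTop atBot := by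
  obtain ⟨k, hk, hfg⟩ := h
  exact tendsto_atBot_mono' atTop hfg (tendsto_neg_atTop_atBot.comp (hg.const_mul_atTop hk))

lemma NegDominated.of_mul_opow (hp : 0 < p) (hr : ∀ᶠ t in atTop, 0 < r t)
    (hg : ∀ᶠ t in atTop, 0 ≤ g t) (h : NegDominated (fun t => r t * opow (f t) p) g) :
    NegDominated f fun t => r t ^ (-(1 / p)) * g t ^ (1 / p) := by
  obtain ⟨k, hk, hfg⟩ := h
  refine ⟨k ^ (1 / p), Real.rpow_pos_of_pos hk _, ?_⟩
  filter_upwards [hr, hg, hfg] with t hrt hgt ht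
  exact le_neg_of_mul_opow_le hp hrt hk.le hgt ht

lemma NegDominated.of_deriv (hf : ∀ᶠ t in atTop, DifferentiableAt ℝ f t)
    (hφ : ∀ t ∈ Ici a, IntervalIntegrable φ volume a t)
    (hdiv : Tendsto (fun t => ∫ s in a..t, φ s) atTop atTop) (h : NegDominated (deriv f) φ) :
    NegDominated f fun t => ∫ s in a..t, φ s := by
  obtain ⟨k, hk, hfφ⟩ := h
  obtain ⟨T, hT⟩ := eventually_atTop.1 ((hf.and hfφ).and (eventually_ge_atTop a))
  have haT : a ≤ T := (hT T le_rfl).2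
  refine ⟨k / 2, half_pos hk, ?_⟩
  filter_upwards [eventually_ge_atTop T,
    (hdiv.const_mul_atTop (half_pos hk)).eventually_ge_atTop (f T + k * ∫ s in a..T, φ s)]
    with t hTt hlarge
  have hφT := hφ T haT
  have hφTt : IntervalIntegrable φ volume T t := hφT.symm.trans (hφ t (haT.trans hTt))
  have hincr : f t - f T ≤ ∫ s in T..t, -(k * φ s) :=
    intervalIntegral.sub_le_integral_of_hasDeriv_right_of_le hTt
      (fun s hs => (hT s hs.1).1.1.continuousAt.continuousWithinAt)
      (fun s hs => (hT s hs.1.le).1.1.hasDerivAt.hasDerivWithinAt)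
      ((intervalIntegrable_iff_integrableOn_Icc_of_le hTt).1 (hφTt.const_mul k).neg)
      (fun s hs => (hT s hs.1.le).1.2)
  rw [intervalIntegral.integral_neg, intervalIntegral.integral_const_mul] at hincr
  rw [← intervalIntegral.integral_add_adjacent_intervals hφT hφTt] at hlarge ⊢
  linarith

lemma NegDominated.of_mul_opow_deriv (hp : 0 < p) (hr : ∀ t ∈ Ici a, 0 < r t)
    (hw : IntegrableOn (fun t => r t ^ (-(1 / p))) (Ici a)) (hg : MonotoneOn g (Ici a))
    (hg0 : ∀ t ∈ Ici a, 0 ≤ g t) (hf : ∀ᶠ t in atTop, DifferentiableAt ℝ f t)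
    (hdiv : Tendsto (halfLinearPrimitive a r p g) atTop atTop)
    (h : NegDominated (fun t => r t * opow (deriv f t) p) g) :
    NegDominated f (halfLinearPrimitive a r p g) :=
  have hge : ∀ᶠ t in atTop, t ∈ Ici a := eventually_ge_atTop a
  .of_deriv hf (intervalIntegrable_halfLinear_integrand hp hw hg hg0) hdiv
    (.of_mul_opow hp (hge.mono hr) (hge.mono hg0) h)

end NegDominated

section Solutions

variable {t₀ α β γ : ℝ} {r₁ r₂ q σ y : ℝ → ℝ}

lemma OddQuotient.pos {x : ℝ} (h : OddQuotient x) : 0 < x := by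
  obtain ⟨m, n, -, -, hm, hn, rfl⟩ := h
  positivity

/-- Noncanonical coefficients with arbitrary positive exponents; regularity is only imposed through
integrability, the potential `q` being nonnegative and integrable on bounded intervals. -/
structure NoncanonicalHyp (t₀ α β : ℝ) (r₁ r₂ q : ℝ → ℝ) : Prop where
  α_pos : 0 < α
  β_pos : 0 < β
  r₁_pos : ∀ t ∈ Ici t₀, 0 < r₁ t
  r₂_pos : ∀ t ∈ Ici t₀, 0 < r₂ t
  integrableOn_r₁ : IntegrableOn (fun s => r₁ s ^ (-(1 / α))) (Ici t₀)
  integrableOn_r₂ : IntegrableOn (fun s => r₂ s ^ (-(1 / β))) (Ici t₀)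
  intervalIntegrable_q : ∀ t ∈ Ici t₀, IntervalIntegrable q volume t₀ t
  q_nonneg : ∀ t ∈ Ici t₀, 0 ≤ q t

lemma Hyp.noncanonicalHyp (H : Hyp t₀ α β γ r₁ r₂ q σ) : NoncanonicalHyp t₀ α β r₁ r₂ q where
  α_pos := H.hα.pos
  β_pos := H.hβ.pos
  r₁_pos := H.hr₁p
  r₂_pos := H.hr₂p
  integrableOn_r₁ := H.hπ₁fin
  integrableOn_r₂ := H.hπ₂fin
  intervalIntegrable_q _ ht := (H.hqc.mono Icc_subset_Ici_self).intervalIntegrable_of_Icc ht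
  q_nonneg := H.hq0

lemma not_oscillatory_iff : ¬Oscillatory y ↔ ∀ᶠ t in atTop, y t ≠ 0 := by
  simp only [Oscillatory, eventually_atTop]
  push Not
  rfl

lemma L1_neg (r₁ : ℝ → ℝ) (α : ℝ) (y : ℝ → ℝ) : L1 r₁ α (-y) = -L1 r₁ α y := by
  funext t
  simp only [L1, deriv.neg, opow_neg_left, mul_neg, Pi.neg_apply]

lemma L2_neg (r₁ r₂ : ℝ → ℝ) (α β : ℝ) (y : ℝ → ℝ) :
    L2 r₁ r₂ α β (-y) = -L2 r₁ r₂ α β y := by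
  funext t
  simp only [L2, L1_neg, deriv.neg, opow_neg_left, mul_neg, Pi.neg_apply]

lemma L3_neg (r₁ r₂ : ℝ → ℝ) (α β : ℝ) (y : ℝ → ℝ) :
    L3 r₁ r₂ α β (-y) = -L3 r₁ r₂ α β y := by
  funext t
  simp only [L3, L2_neg, deriv.neg, Pi.neg_apply]

/-- `y` satisfies equation (E) near `+∞`, as a germ: unlike `IsSolution`, neither the half-line nor
the nontriviality of `y` is recorded. -/
structure EventuallySolves (α β γ : ℝ) (r₁ r₂ q σ y : ℝ → ℝ) : Prop where
  differentiableAt : ∀ᶠ t in atTop, DifferentiableAt ℝ y t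
  differentiableAt_L1 : ∀ᶠ t in atTop, DifferentiableAt ℝ (L1 r₁ α y) t
  differentiableAt_L2 : ∀ᶠ t in atTop, DifferentiableAt ℝ (L2 r₁ r₂ α β y) t
  L3_eq : ∀ᶠ t in atTop, L3 r₁ r₂ α β y t = -(q t * opow (y (σ t)) γ)

lemma IsSolution.eventuallySolves (h : IsSolution t₀ α β γ r₁ r₂ q σ y) :
    EventuallySolves α β γ r₁ r₂ q σ y := by
  obtain ⟨T, -, -, hy, -, hL1, -, hL2, hE, -⟩ := h
  have hnhds : ∀ᶠ t in atTop, Ici T ∈ nhds t :=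
    (eventually_gt_atTop T).mono fun t ht => Ici_mem_nhds ht
  exact ⟨hnhds.mono fun t ht => hy.differentiableAt ht,
    hnhds.mono fun t ht => hL1.differentiableAt ht,
    hnhds.mono fun t ht => hL2.differentiableAt ht,
    (eventually_ge_atTop T).mono fun t ht => eq_neg_of_add_eq_zero_left (hE t ht)⟩

namespace EventuallySolves

lemma neg (h : EventuallySolves α β γ r₁ r₂ q σ y) :
    EventuallySolves α β γ r₁ r₂ q σ (-y) where
  differentiableAt := h.differentiableAt.mono fun t ht => ht.neg
  differentiableAt_L1 := by
    rw [L1_neg]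
    exact h.differentiableAt_L1.mono fun t ht => ht.neg
  differentiableAt_L2 := by
    rw [L2_neg]
    exact h.differentiableAt_L2.mono fun t ht => ht.neg
  L3_eq := by
    filter_upwards [h.L3_eq] with t ht
    rw [L3_neg, Pi.neg_apply, Pi.neg_apply, ht, opow_neg_left, mul_neg]

lemma eventuallyOfOneSign_deriv (h : EventuallySolves α β γ r₁ r₂ q σ y)
    (hr₁ : ∀ᶠ t in atTop, 0 < r₁ t) (hr₂ : ∀ᶠ t in atTop, 0 < r₂ t)
    (hq : ∀ᶠ t in atTop, 0 ≤ q t) (hyσ : ∀ᶠ t in atTop, 0 ≤ y (σ t)) :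
    EventuallyOfOneSign (deriv y) := by
  have hL3 : EventuallyOfOneSign (deriv (L2 r₁ r₂ α β y)) := by
    refine .inr ?_
    filter_upwards [h.L3_eq, hq, hyσ] with t ht hqt hyt
    exact ht.trans_le (neg_nonpos.2 (mul_nonneg hqt (opow_nonneg_iff.2 hyt)))
  have hL2 : EventuallyOfOneSign (L2 r₁ r₂ α β y) := .of_deriv h.differentiableAt_L2 hL3
  have hL1 : EventuallyOfOneSign (L1 r₁ α y) :=
    .of_deriv h.differentiableAt_L1 (.of_mul_opow hr₂ hL2)
  exact .of_mul_opow hr₁ hL1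

lemma negDominated_L3 (h : EventuallySolves α β γ r₁ r₂ q σ y) (hγ : 0 ≤ γ)
    (hq : ∀ᶠ t in atTop, 0 ≤ q t) {c : ℝ} (hc : 0 < c) (hyσ : ∀ᶠ t in atTop, c ≤ y (σ t)) :
    NegDominated (L3 r₁ r₂ α β y) q := by
  refine ⟨c ^ γ, Real.rpow_pos_of_pos hc γ, ?_⟩
  filter_upwards [h.L3_eq, hq, hyσ] with t ht hqt hyt
  rw [ht, mul_comm]
  exact neg_le_neg (mul_le_mul_of_nonneg_right (rpow_le_opow hγ hc hyt) hqt)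

lemma tendsto_atBot (h : EventuallySolves α β γ r₁ r₂ q σ y) (H : NoncanonicalHyp t₀ α β r₁ r₂ q)
    (hγ : 0 ≤ γ)
    (hdiv : Tendsto (halfLinearPrimitive t₀ r₁ α (halfLinearPrimitive t₀ r₂ β
      fun u => ∫ s in t₀..u, q s)) atTop atTop)
    {c : ℝ} (hc : 0 < c) (hyσ : ∀ᶠ t in atTop, c ≤ y (σ t)) : Tendsto y atTop atBot := by
  set Q : ℝ → ℝ := fun u => ∫ s in t₀..u, q s
  set G : ℝ → ℝ := halfLinearPrimitive t₀ r₂ β Q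
  have hQ : MonotoneOn Q (Ici t₀) := monotoneOn_integral_of_nonneg H.intervalIntegrable_q H.q_nonneg
  have hQ0 : ∀ t ∈ Ici t₀, 0 ≤ Q t := fun t ht => integral_nonneg_of_nonneg H.q_nonneg ht
  have hG : MonotoneOn G (Ici t₀) :=
    monotoneOn_halfLinearPrimitive H.β_pos H.r₂_pos H.integrableOn_r₂ hQ hQ0
  have hG0 : ∀ t ∈ Ici t₀, 0 ≤ G t := halfLinearPrimitive_nonneg H.r₂_pos hQ0
  have hG_top : Tendsto G atTop atTop :=
    tendsto_atTop_of_tendsto_halfLinearPrimitive H.α_pos H.r₁_pos H.integrableOn_r₁ hG hG0 hdiv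
  have hQ_top : Tendsto Q atTop atTop :=
    tendsto_atTop_of_tendsto_halfLinearPrimitive H.β_pos H.r₂_pos H.integrableOn_r₂ hQ hQ0 hG_top
  have hL3 : NegDominated (L3 r₁ r₂ α β y) q :=
    h.negDominated_L3 hγ ((eventually_ge_atTop t₀).mono H.q_nonneg) hc hyσ
  have hL2 : NegDominated (L2 r₁ r₂ α β y) Q :=
    .of_deriv h.differentiableAt_L2 H.intervalIntegrable_q hQ_top hL3
  have hL1 : NegDominated (L1 r₁ α y) G :=
    .of_mul_opow_deriv H.β_pos H.r₂_pos H.integrableOn_r₂ hQ hQ0 h.differentiableAt_L1 hG_top hL2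
  have hy : NegDominated y (halfLinearPrimitive t₀ r₁ α G) :=
    .of_mul_opow_deriv H.α_pos H.r₁_pos H.integrableOn_r₁ hG hG0 h.differentiableAt hdiv hL1
  exact hy.tendsto_atBot hdiv

lemma tendsto_zero_of_eventually_pos (h : EventuallySolves α β γ r₁ r₂ q σ y)
    (H : NoncanonicalHyp t₀ α β r₁ r₂ q) (hγ : 0 ≤ γ)
    (hpos : ∀ᶠ t in atTop, 0 < y t) (hσ : Tendsto σ atTop atTop)
    (hdiv : Tendsto (halfLinearPrimitive t₀ r₁ α (halfLinearPrimitive t₀ r₂ β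
      fun u => ∫ s in t₀..u, q s)) atTop atTop) :
    Tendsto y atTop (nhds 0) := by
  have hge := eventually_ge_atTop t₀
  have hsign : EventuallyOfOneSign (deriv y) := h.eventuallyOfOneSign_deriv (hge.mono H.r₁_pos)
    (hge.mono H.r₂_pos) (hge.mono H.q_nonneg) ((hσ.eventually hpos).mono fun _ ht => ht.le)
  refine (tendsto_zero_or_eventually_ge_of_deriv h.differentiableAt hpos hsign).resolve_right ?_
  rintro ⟨c, hc, hyc⟩
  have hbot := h.tendsto_atBot H hγ hdiv hc (hσ.eventually hyc)
  obtain ⟨t, hneg, ht⟩ := ((hbot.eventually_lt_atBot 0).and hpos).exists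
  exact hneg.not_gt ht

end EventuallySolves

theorem propertyA_of_div_general (H : NoncanonicalHyp t₀ α β r₁ r₂ q) (hγ : 0 ≤ γ)
    (hσ : Tendsto σ atTop atTop)
    (hdiv : Tendsto (fun t => ∫ v in t₀..t, r₁ v ^ (-(1 / α)) *
      (∫ u in t₀..v, r₂ u ^ (-(1 / β)) * (∫ s in t₀..u, q s) ^ (1 / β)) ^ (1 / α)) atTop atTop) :
    PropertyA t₀ α β γ r₁ r₂ q σ := by
  intro y hy
  rw [or_iff_not_imp_left, not_oscillatory_iff]
  intro hne
  have hE : EventuallySolves α β γ r₁ r₂ q σ y := hy.eventuallySolves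
  have hcont : ∀ᶠ t in atTop, ContinuousAt y t :=
    hE.differentiableAt.mono fun t ht => ht.continuousAt
  rcases eventually_pos_or_neg_of_ne_zero hcont hne with hpos | hneg
  · exact hE.tendsto_zero_of_eventually_pos H hγ hpos hσ hdiv
  · have hpos : ∀ᶠ t in atTop, 0 < (-y) t := hneg.mono fun t ht => neg_pos.2 ht
    simpa using (hE.neg.tendsto_zero_of_eventually_pos H hγ hpos hσ hdiv).neg

end Solutions

theorem propertyA_of_div (t₀ α β γ : ℝ) (r₁ r₂ q σ : ℝ → ℝ)
    (H : Hyp t₀ α β γ r₁ r₂ q σ)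
    (hdiv : Filter.Tendsto (fun t => ∫ v in t₀..t, r₁ v ^ (-(1/α)) *
      (∫ u in t₀..v, r₂ u ^ (-(1/β)) * (∫ s in t₀..u, q s) ^ (1/β)) ^ (1/α))
      Filter.atTop Filter.atTop) :
    PropertyA t₀ α β γ r₁ r₂ q σ :=
  propertyA_of_div_general H.noncanonicalHyp H.hγ.pos.le
    (tendsto_atTop_mono' atTop ((eventually_ge_atTop t₀).mono H.hσadv) tendsto_id) hdiv
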